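/- Kernel count on covariant Ext: let 𝒜 be a finitary hereditary abelian 𝔽_q-linear category, 0 → A → B → C → 0 a short exact sequence in 𝒜, and X an object of 𝒜. Then the induced map θ : Ext¹(X, B) → Ext¹(X, C) satisfies |ker θ| = (|Ext¹(X, A)| · |Hom(X, B)|) / (|Hom(X, C)| · |Hom(X, A)|). -/

import Mathlib

/-!
The long exact sequence of `Ext(X, -)` begins
`0 → Hom(X, A₁) → Hom(X, B) → Hom(X, C) → Ext¹(X, A₁) → Ext¹(X, B) → Ext¹(X, C)`,
and its last map is `θ`. So `0 → Hom(X, A₁) → Hom(X, B) → Hom(X, C) → Ext¹(X, A₁) → ker θ → 0`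
is an exact sequence of finite abelian groups, and the alternating product of the orders of its
terms is `1` (`card_ker_mul_of_exact`).
-/

open CategoryTheory CategoryTheory.Abelian

universe w v u

/-- No finiteness is needed: if `G` is infinite, so is the kernel or the image, and both sides are
`0`. -/
lemma card_ker_mul_card_range {G H : Type*} [AddCommGroup G] [AddCommGroup H]
    (f : G →+ H) : Nat.card f.ker * Nat.card f.range = Nat.card G := by
  rw [← AddSubgroup.index_ker, AddSubgroup.card_mul_index]

/-- Multiplicativity of orders along an exact sequence `0 → G₁ → G₂ → G₃ → G₄ → G₅ → G₆`,
truncated to the kernel of the last map. With `Nat.card` of an infinite type equal to `0`, no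
finiteness is needed. -/
lemma card_ker_mul_of_exact {G₁ G₂ G₃ G₄ G₅ G₆ : Type*} [AddCommGroup G₁] [AddCommGroup G₂]
    [AddCommGroup G₃] [AddCommGroup G₄] [AddCommGroup G₅] [AddCommGroup G₆]
    (f : G₁ →+ G₂) (g : G₂ →+ G₃) (d : G₃ →+ G₄) (f' : G₄ →+ G₅) (g' : G₅ →+ G₆)
    (hf : Function.Injective f) (h₂ : g.ker = f.range) (h₃ : d.ker = g.range)
    (h₄ : f'.ker = d.range) (h₅ : g'.ker = f'.range) :
    Nat.card g'.ker * (Nat.card G₃ * Nat.card G₁) = Nat.card G₄ * Nat.card G₂ := by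
  have e₁ := card_ker_mul_card_range f
  have e₂ := card_ker_mul_card_range g
  have e₃ := card_ker_mul_card_range d
  have e₄ := card_ker_mul_card_range f'
  rw [(AddMonoidHom.ker_eq_bot_iff f).2 hf, AddSubgroup.card_bot, one_mul] at e₁
  rw [h₂] at e₂
  rw [h₃] at e₃
  rw [h₄] at e₄
  rw [h₅, ← e₂, ← e₃, ← e₄, ← e₁]
  ring

/-- **Kernel count on covariant Ext.** Let `A` be a finitary hereditary abelian
`𝔽_q`-linear category, `0 → A₁ → B → C → 0` a short exact sequence and `X` an object.
The induced map `θ : Ext¹(X, B) → Ext¹(X, C)` satisfies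
`|ker θ| = (|Ext¹(X, A₁)| · |Hom(X, B)|) / (|Hom(X, C)| · |Hom(X, A₁)|)`. -/
theorem kernel_count_covariant_ext
    (F : Type) [Field F] [Fintype F]
    {A : Type u} [Category.{v} A] [Abelian A] [Linear F A] [HasExt.{w} A]
    (hfinHom : ∀ M N : A, Finite (M ⟶ N))
    (hfinExt : ∀ M N : A, Finite (Ext M N 1))
    (hher : ∀ M N : A, Subsingleton (Ext M N 2))
    (S : ShortComplex A) (hS : S.ShortExact) (X : A) :
    (Nat.card {x : Ext X S.X₂ 1 // x.comp (Ext.mk₀ S.g) (add_zero 1) = 0} : ℚ) =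
      ((Nat.card (Ext X S.X₁ 1) : ℚ) * (Nat.card (X ⟶ S.X₂) : ℚ)) /
        ((Nat.card (X ⟶ S.X₃) : ℚ) * (Nat.card (X ⟶ S.X₁) : ℚ)) := by
  have hmono := hS.mono_f
  have := hfinHom X S.X₃
  have := hfinHom X S.X₁
  have h := card_ker_mul_of_exact
    ((Ext.mk₀ S.f).postcomp X (add_zero 0)) ((Ext.mk₀ S.g).postcomp X (add_zero 0))
    (hS.extClass.postcomp X (zero_add 1))
    ((Ext.mk₀ S.f).postcomp X (add_zero 1)) ((Ext.mk₀ S.g).postcomp X (add_zero 1))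
    (Ext.postcomp_mk₀_injective_of_mono X S.f)
    (ShortComplex.ab_exact_iff_range_eq_ker.1 (Ext.covariant_sequence_exact₂' X hS 0)).symm
    (ShortComplex.ab_exact_iff_range_eq_ker.1
      (Ext.covariant_sequence_exact₃' X hS 0 1 (zero_add 1))).symm
    (ShortComplex.ab_exact_iff_range_eq_ker.1
      (Ext.covariant_sequence_exact₁' X hS 0 1 (zero_add 1))).symm
    (ShortComplex.ab_exact_iff_range_eq_ker.1 (Ext.covariant_sequence_exact₂' X hS 1)).symm
  -- degree-zero `Ext` groups are `Hom` groups
  simp only [Nat.card_congr (Ext.homEquiv₀ (X := X))] at h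
  have h₃ : (Nat.card (X ⟶ S.X₃) : ℚ) ≠ 0 := Nat.cast_ne_zero.2 Nat.card_pos.ne'
  have h₁ : (Nat.card (X ⟶ S.X₁) : ℚ) ≠ 0 := Nat.cast_ne_zero.2 Nat.card_pos.ne'
  rw [eq_div_iff (mul_ne_zero h₃ h₁)]
  exact_mod_cast h
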